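/- arXiv:2501.11236 — 2 statements merged into one kernel-verified Lean document; each statement's English description precedes it below -/
import Mathlib

section
/- Let Z and Y be real normed vector spaces, let G_t, G_{t+1} : Z → Y, let y_k, y_m ∈ Y, let z₁, z₂ ∈ Z, and let ε̂ > 0 and α > 0 be reals. Assume: (i) attraction of z₁: ‖y_k - G_{t+1}(z₁)‖ + ε̂ < ‖y_k - G_t(z₁)‖; (ii) the neighborhood bound ‖G_t(z₁) - G_t(z₂)‖ + ‖G_{t+1}(z₁) - G_{t+1}(z₂)‖ ≤ ε̂/2; and (iii) the mode separation ‖y_m - y_k‖ < 2α. Then ‖y_m - G_{t+1}(z₂)‖ + (ε̂/2 - 2α) < ‖y_k - G_t(z₂)‖. -/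
theorem attraction_implies_distraction
    {Z Y : Type*} [NormedAddCommGroup Z] [NormedSpace ℝ Z]
    [NormedAddCommGroup Y] [NormedSpace ℝ Y]
    (Gt Gt1 : Z → Y) (yk ym : Y) (z₁ z₂ : Z) (εhat α : ℝ)
    (hε : 0 < εhat) (hα : 0 < α)
    (hattr : ‖yk - Gt1 z₁‖ + εhat < ‖yk - Gt z₁‖)
    (hnbhd : ‖Gt z₁ - Gt z₂‖ + ‖Gt1 z₁ - Gt1 z₂‖ ≤ εhat / 2)
    (hmode : ‖ym - yk‖ < 2 * α) :
    ‖ym - Gt1 z₂‖ + (εhat / 2 - 2 * α) < ‖yk - Gt z₂‖ := by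
  have h1 := norm_sub_le_norm_sub_add_norm_sub ym yk (Gt1 z₂)
  have h2 := norm_sub_le_norm_sub_add_norm_sub yk (Gt1 z₁) (Gt1 z₂)
  have h3 := norm_sub_le_norm_sub_add_norm_sub yk (Gt z₂) (Gt z₁)
  rw [norm_sub_rev (Gt z₂) (Gt z₁)] at h3
  linarith
end

section
/- Let Z and Y be real normed vector spaces, let G_t, G_{t+1} : Z → Y, let y_k, y_m ∈ Y, z₁ ∈ Z, and let ε̂ > 0, α > 0, τ > 0 be reals; set r = ε̂ / (2τ). Assume: (i) ‖y_k - G_{t+1}(z₁)‖ + ε̂ < ‖y_k - G_t(z₁)‖; (ii) for every z₂ with ‖z₁ - z₂‖ < r one has ‖G_t(z₁) - G_t(z₂)‖ + ‖G_{t+1}(z₁) - G_{t+1}(z₂)‖ ≤ τ · ‖z₁ - z₂‖; and (iii) ‖y_m - y_k‖ < 2α. Then for every z₂ with ‖z₁ - z₂‖ < r, ‖y_m - G_{t+1}(z₂)‖ + (ε̂/2 - 2α) < ‖y_k - G_t(z₂)‖. -/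
theorem latent_neighborhood_ball_distraction
    {Z Y : Type*} [NormedAddCommGroup Z] [NormedSpace ℝ Z]
    [NormedAddCommGroup Y] [NormedSpace ℝ Y]
    (Gt Gt1 : Z → Y) (yk ym : Y) (z₁ : Z) (εhat α τ : ℝ)
    (hε : 0 < εhat) (hα : 0 < α) (hτ : 0 < τ)
    (r : ℝ) (hr : r = εhat / (2 * τ))
    (hattr : ‖yk - Gt1 z₁‖ + εhat < ‖yk - Gt z₁‖)
    (hlip : ∀ z₂ : Z, ‖z₁ - z₂‖ < r →
      ‖Gt z₁ - Gt z₂‖ + ‖Gt1 z₁ - Gt1 z₂‖ ≤ τ * ‖z₁ - z₂‖)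
    (hmode : ‖ym - yk‖ < 2 * α) :
    ∀ z₂ : Z, ‖z₁ - z₂‖ < r →
      ‖ym - Gt1 z₂‖ + (εhat / 2 - 2 * α) < ‖yk - Gt z₂‖ := by
  intro z₂ hz
  have h1 := hlip z₂ hz
  have h2 : τ * ‖z₁ - z₂‖ < εhat / 2 := by
    have h := mul_lt_mul_of_pos_left hz hτ
    have e : τ * r = εhat / 2 := by
      rw [hr]
      field_simp
    linarith
  have h3 := norm_sub_le_norm_sub_add_norm_sub ym yk (Gt1 z₂)
  have h4 := norm_sub_le_norm_sub_add_norm_sub yk (Gt1 z₁) (Gt1 z₂)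
  have h5 := norm_sub_le_norm_sub_add_norm_sub yk (Gt z₂) (Gt z₁)
  rw [norm_sub_rev (Gt z₂) (Gt z₁)] at h5
  linarith
end
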